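/- Let n ≥ 2, let U ⊂ ℝⁿ be a bounded measurable set of diameter d > 0, and let Φ be an N-function. For a measurable function f : U → ℝ define (Sf)(x) = ∫_U |f(y)| · |y − x|^{1−n} dy for x ∈ U. Then with C = ∫_{{z ∈ ℝⁿ : |z| ≤ d}} |z|^{1−n} dz (which is finite), one has ‖Sf‖_{(Φ),U} ≤ C · ‖f‖_{(Φ),U} for every measurable f : U → ℝ, where ‖·‖_{(Φ),U} denotes the Luxemburg norm on U with Lebesgue measure. (Consequently, the Iwaniec–Lutoborski averaged homotopy operator T, which satisfies |Tθ(x)| ≤ C'∫_U |θ(y)|·|y−x|^{1−n} dy on a bounded convex domain U, maps L^Φ(U, Λ^k) continuously into L^Φ(U, Λ^{k−1}), and hence H^k_Φ(𝔹ⁿ) = 0 for k = 1, …, n.) -/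

import Mathlib

open MeasureTheory ENNReal

/-- An N-function: even, convex, vanishing exactly at `0`, with `Φ(x)/x → 0` as `x → 0⁺`
and `Φ(x)/x → ∞` as `x → ∞`. -/
structure IsNFunction (Φ : ℝ → ℝ) : Prop where
  nonneg : ∀ x, 0 ≤ Φ x
  even : ∀ x, Φ (-x) = Φ x
  convex : ConvexOn ℝ Set.univ Φ
  zero_iff : ∀ x, Φ x = 0 ↔ x = 0
  tendsto_zero : Filter.Tendsto (fun x => Φ x / x) (nhdsWithin 0 (Set.Ioi 0)) (nhds 0)
  tendsto_atTop : Filter.Tendsto (fun x => Φ x / x) Filter.atTop Filter.atTop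

/-- The Luxemburg (gauge) norm `‖f‖_{(Φ)} = inf {K > 0 : ∫ Φ(f/K) dμ ≤ 1}`, with value `∞`
when no such `K` exists. -/
noncomputable def luxNorm {α : Type*} [MeasurableSpace α] (μ : Measure α)
    (Φ : ℝ → ℝ) (f : α → ℝ) : ℝ≥0∞ :=
  sInf {K : ℝ≥0∞ | ∃ k : ℝ, 0 < k ∧ K = ENNReal.ofReal k ∧
    ∫⁻ x, ENNReal.ofReal (Φ (f x / k)) ∂μ ≤ 1}

/-!
By Jensen's inequality, averaging the translates of `f` against a probability measure does not
increase the modular `∫ Φ(f)`, since each translate has the same modular. Homogeneity of the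
Luxemburg norm then gives Young's inequality `‖f ∗ ν‖ ≤ ν(G) ‖f‖` for a finite measure `ν`.
For `x, y ∈ U` the difference `y - x` lies in the closed ball of radius `d`, so on `U` the
potential `Sf` is the convolution of the zero extension of `|f|` with the finite measure of density
`|z|^{1-n}` on that ball.
-/

open Metric Module Set

/-- A finite-valued Young function: an N-function without the growth conditions at `0` and `∞` and
without strict positivity away from `0`. -/
structure IsYoungFunction (Φ : ℝ → ℝ) : Prop where
  even : ∀ x, Φ (-x) = Φ x
  convex : ConvexOn ℝ univ Φ
  map_zero : Φ 0 = 0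

theorem IsNFunction.isYoungFunction {Φ : ℝ → ℝ} (hΦ : IsNFunction Φ) : IsYoungFunction Φ :=
  ⟨hΦ.even, hΦ.convex, (hΦ.zero_iff 0).2 rfl⟩

namespace IsYoungFunction

variable {Φ : ℝ → ℝ}

theorem nonneg (hΦ : IsYoungFunction Φ) (x : ℝ) : 0 ≤ Φ x := by
  have midpoint_le := hΦ.convex.2 (mem_univ x) (mem_univ (-x))
    (by norm_num : (0 : ℝ) ≤ 1 / 2) (by norm_num : (0 : ℝ) ≤ 1 / 2) (by norm_num)
  simp only [smul_eq_mul, mul_neg, add_neg_cancel, hΦ.map_zero, hΦ.even] at midpoint_le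
  linarith

theorem continuous (hΦ : IsYoungFunction Φ) : Continuous Φ :=
  continuousOn_univ.1 (hΦ.convex.continuousOn isOpen_univ)

theorem ofReal_map_average_le {α : Type*} [MeasurableSpace α] {ν : Measure α} [IsFiniteMeasure ν]
    [NeZero ν] (hΦ : IsYoungFunction Φ) (g : α → ℝ) :
    ENNReal.ofReal (Φ (⨍ x, g x ∂ν)) ≤ ⨍⁻ x, ENNReal.ofReal (Φ (g x)) ∂ν := by
  by_cases hg : Integrable g ν
  · have hΦg_nonneg : ∀ {ρ : Measure α}, 0 ≤ᵐ[ρ] fun x => Φ (g x) :=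
      .of_forall fun x => hΦ.nonneg _
    rcases eq_or_ne (∫⁻ x, ENNReal.ofReal (Φ (g x)) ∂ν) ∞ with htop | htop
    · rw [laverage_eq, htop, ENNReal.top_div_of_ne_top (measure_ne_top ν _)]
      exact le_top
    · have hΦg : Integrable (Φ ∘ g) ν :=
        ⟨hΦ.continuous.comp_aestronglyMeasurable hg.aestronglyMeasurable,
          (hasFiniteIntegral_iff_ofReal hΦg_nonneg).2 htop.lt_top⟩
      calc ENNReal.ofReal (Φ (⨍ x, g x ∂ν))
          ≤ ENNReal.ofReal (⨍ x, Φ (g x) ∂ν) := ENNReal.ofReal_le_ofReal <|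
            hΦ.convex.map_average_le hΦ.continuous.continuousOn isClosed_univ (by simp) hg hΦg
        _ = ⨍⁻ x, ENNReal.ofReal (Φ (g x)) ∂ν :=
            ofReal_integral_eq_lintegral_ofReal hΦg.to_average hΦg_nonneg
  · -- Here the average is `0` by convention, and `Φ 0 = 0`.
    simp only [average_eq, integral_undef hg, smul_zero, hΦ.map_zero, ENNReal.ofReal_zero, zero_le]

end IsYoungFunction

section Luxemburg

variable {α : Type*} [MeasurableSpace α] {μ ν : Measure α} {Φ : ℝ → ℝ} {f g : α → ℝ}

theorem luxNorm_congr_ae (h : f =ᵐ[μ] g) : luxNorm μ Φ f = luxNorm μ Φ g := by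
  have modular_congr (k : ℝ) :
      ∫⁻ x, ENNReal.ofReal (Φ (f x / k)) ∂μ = ∫⁻ x, ENNReal.ofReal (Φ (g x / k)) ∂μ :=
    lintegral_congr_ae (h.fun_comp fun t => ENNReal.ofReal (Φ (t / k)))
  simp only [luxNorm, modular_congr]

theorem luxNorm_mono_measure (h : μ ≤ ν) : luxNorm μ Φ f ≤ luxNorm ν Φ f :=
  sInf_le_sInf fun _ ⟨k, hk, hK, hf⟩ => ⟨k, hk, hK, (lintegral_mono' h le_rfl).trans hf⟩

theorem luxNorm_le_ofReal_mul {β : Type*} [MeasurableSpace β] {ρ : Measure β} {h : β → ℝ} {C : ℝ}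
    (hC : 0 < C)
    (hle : ∀ k : ℝ, 0 < k → ∫⁻ x, ENNReal.ofReal (Φ (f x / (C * k))) ∂μ ≤
      ∫⁻ y, ENNReal.ofReal (Φ (h y / k)) ∂ρ) :
    luxNorm μ Φ f ≤ ENNReal.ofReal C * luxNorm ρ Φ h := by
  have hC0 : ENNReal.ofReal C ≠ 0 := (ENNReal.ofReal_pos.2 hC).ne'
  rw [← ENNReal.div_le_iff' hC0 ENNReal.ofReal_ne_top]
  refine le_sInf ?_
  rintro _ ⟨k, hk, rfl, hmod⟩
  rw [ENNReal.div_le_iff' hC0 ENNReal.ofReal_ne_top, ← ENNReal.ofReal_mul hC.le]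
  exact sInf_le ⟨C * k, mul_pos hC hk, rfl, (hle k hk).trans hmod⟩

theorem luxNorm_zero (hΦ : IsYoungFunction Φ) : luxNorm μ Φ (fun _ => 0) = 0 := by
  refine nonpos_iff_eq_zero.1 (ENNReal.le_of_forall_pos_le_add fun ε hε _ => ?_)
  rw [zero_add]
  refine sInf_le ⟨ε, hε, ENNReal.ofReal_coe_nnreal.symm, ?_⟩
  simp only [zero_div, hΦ.map_zero, ENNReal.ofReal_zero, lintegral_zero, zero_le]

theorem luxNorm_abs (hΦ : IsYoungFunction Φ) : luxNorm μ Φ (fun x => |f x|) = luxNorm μ Φ f := by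
  have map_abs_div (k : ℝ) (x : α) : Φ (|f x| / k) = Φ (f x / k) := by
    rcases abs_choice (f x) with h | h <;> simp only [h, neg_div, hΦ.even]
  simp only [luxNorm, map_abs_div]

theorem luxNorm_indicator (hΦ : IsYoungFunction Φ) {s : Set α} (hs : MeasurableSet s) :
    luxNorm μ Φ (s.indicator f) = luxNorm (μ.restrict s) Φ f := by
  have modular_indicator (k : ℝ) : ∫⁻ x, ENNReal.ofReal (Φ (s.indicator f x / k)) ∂μ =
      ∫⁻ x in s, ENNReal.ofReal (Φ (f x / k)) ∂μ := by
    rw [← lintegral_indicator hs]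
    congr 1 with x
    by_cases hx : x ∈ s <;> simp [hx, hΦ.map_zero]
  simp only [luxNorm, modular_indicator]

end Luxemburg

section Young

variable {G : Type*} [AddGroup G] [MeasurableSpace G] [MeasurableAdd₂ G] {μ : Measure G} [SFinite μ]
  [μ.IsAddLeftInvariant] {Φ : ℝ → ℝ} {f : G → ℝ}

theorem lintegral_ofReal_average_translate_le (hΦ : IsYoungFunction Φ) (hf : AEMeasurable f μ)
    (ν : Measure G) [IsFiniteMeasure ν] [NeZero ν] :
    ∫⁻ x, ENNReal.ofReal (Φ (⨍ z, f (z + x) ∂ν)) ∂μ ≤ ∫⁻ x, ENNReal.ofReal (Φ (f x)) ∂μ := by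
  have hmeas : AEMeasurable (fun p : G × G => ENNReal.ofReal (Φ (f (p.2 + p.1))))
      (μ.prod ((ν univ)⁻¹ • ν)) :=
    (hΦ.continuous.measurable.comp_aemeasurable
      (hf.comp_quasiMeasurePreserving (quasiMeasurePreserving_add_swap _ _))).ennreal_ofReal
  calc ∫⁻ x, ENNReal.ofReal (Φ (⨍ z, f (z + x) ∂ν)) ∂μ
      ≤ ∫⁻ x, ⨍⁻ z, ENNReal.ofReal (Φ (f (z + x))) ∂ν ∂μ :=
        lintegral_mono fun x => hΦ.ofReal_map_average_le fun z => f (z + x)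
    _ = ⨍⁻ z, ∫⁻ x, ENNReal.ofReal (Φ (f (z + x))) ∂μ ∂ν := lintegral_lintegral_swap hmeas
    _ = ⨍⁻ _, ∫⁻ x, ENNReal.ofReal (Φ (f x)) ∂μ ∂ν := by
        congr! 2 with z
        exact lintegral_add_left_eq_self (fun x => ENNReal.ofReal (Φ (f x))) z
    _ = ∫⁻ x, ENNReal.ofReal (Φ (f x)) ∂μ := laverage_const ν _

theorem luxNorm_integral_translate_le (hΦ : IsYoungFunction Φ) (hf : AEMeasurable f μ)
    (ν : Measure G) [IsFiniteMeasure ν] :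
    luxNorm μ Φ (fun x => ∫ z, f (z + x) ∂ν) ≤ ν univ * luxNorm μ Φ f := by
  rcases eq_or_ne ν 0 with rfl | hν
  · simp only [integral_zero_measure, luxNorm_zero hΦ, zero_le]
  have : NeZero ν := ⟨hν⟩
  rw [← ofReal_measureReal (μ := ν)]
  refine luxNorm_le_ofReal_mul measureReal_univ_pos fun k _ => ?_
  have average_scaled (x : G) :
      (∫ z, f (z + x) ∂ν) / (ν.real univ * k) = ⨍ z, f (z + x) / k ∂ν := by
    rw [average_eq, integral_div, smul_eq_mul]
    ring
  simp only [average_scaled]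
  exact lintegral_ofReal_average_translate_le hΦ (hf.div_const k) ν

theorem luxNorm_integral_mul_kernel_le [μ.IsAddRightInvariant] (hΦ : IsYoungFunction Φ)
    (hf : AEMeasurable f μ) {K : G → ℝ} (hK : Integrable K μ) (hK0 : ∀ z, 0 ≤ K z) :
    luxNorm μ Φ (fun x => ∫ y, f y * K (y - x) ∂μ) ≤
      ENNReal.ofReal (∫ z, K z ∂μ) * luxNorm μ Φ f := by
  set ν := μ.withDensity fun z => ENNReal.ofReal (K z)
  have : IsFiniteMeasure ν := isFiniteMeasure_withDensity_ofReal hK.2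
  have hν : ν univ = ENNReal.ofReal (∫ z, K z ∂μ) := by
    rw [withDensity_apply _ .univ, Measure.restrict_univ,
      ofReal_integral_eq_lintegral_ofReal hK (.of_forall hK0)]
  have integral_eq (x : G) : ∫ y, f y * K (y - x) ∂μ = ∫ z, f (z + x) ∂ν := by
    rw [integral_withDensity_eq_integral_toReal_smul₀ hK.aemeasurable.ennreal_ofReal
      (.of_forall fun _ => ENNReal.ofReal_lt_top), ← integral_add_right_eq_self _ x]
    simp only [add_sub_cancel_right, ENNReal.toReal_ofReal (hK0 _), smul_eq_mul, mul_comm]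
  simpa only [integral_eq, hν] using luxNorm_integral_translate_le hΦ hf ν

end Young

section RieszPotential

theorem setIntegral_mul_eq_integral_indicator {E : Type*} [SeminormedAddCommGroup E]
    [MeasurableSpace E] {μ : Measure E} {U : Set E} (hU : MeasurableSet U)
    (hUb : Bornology.IsBounded U) {d : ℝ} (hdiam : diam U ≤ d) (f K : E → ℝ) {x : E} (hx : x ∈ U) :
    ∫ y in U, f y * K (y - x) ∂μ =
      ∫ y, U.indicator f y * (closedBall 0 d).indicator K (y - x) ∂μ := by
  rw [← integral_indicator hU]
  congr 1 with y
  by_cases hy : y ∈ U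
  · have hyx : y - x ∈ closedBall 0 d := by
      rw [mem_closedBall_zero_iff, ← dist_eq_norm]
      exact (dist_le_diam_of_mem hUb hy hx).trans hdiam
    simp only [indicator_of_mem hy, indicator_of_mem hyx]
  · simp only [indicator_of_notMem hy, zero_mul]

variable {E : Type*} [NormedAddCommGroup E] [NormedSpace ℝ E] [FiniteDimensional ℝ E]
  [Nontrivial E] [MeasurableSpace E] [BorelSpace E]

theorem integrableOn_closedBall_norm_rpow (μ : Measure E) [μ.IsAddHaarMeasure] {a : ℝ}
    (ha : -(finrank ℝ E : ℝ) < a) (d : ℝ) :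
    IntegrableOn (fun z : E => ‖z‖ ^ a) (closedBall 0 d) μ := by
  have hmeas : Measurable fun z : E => ‖z‖ ^ a := by fun_prop
  refine (locallyIntegrable_of_norm_le_rpow (C := 1) (α := -a) finrank_pos (by linarith)
    (.of_forall fun z => ?_) hmeas.aestronglyMeasurable).integrableOn_isCompact
    (isCompact_closedBall 0 d)
  rw [Real.norm_of_nonneg (by positivity), one_mul, neg_neg]

theorem riesz_potential_orlicz_bound_general (μ : Measure E) [μ.IsAddHaarMeasure] {a : ℝ}
    (ha : -(finrank ℝ E : ℝ) < a) {Φ : ℝ → ℝ} (hΦ : IsYoungFunction Φ)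
    {U : Set E} (hU : MeasurableSet U) (hUb : Bornology.IsBounded U) {d : ℝ} (hdiam : diam U ≤ d) :
    IntegrableOn (fun z : E => ‖z‖ ^ a) (closedBall 0 d) μ ∧
    ∀ f : E → ℝ, AEMeasurable f (μ.restrict U) →
      luxNorm (μ.restrict U) Φ (fun x => ∫ y in U, |f y| * ‖y - x‖ ^ a ∂μ) ≤
        ENNReal.ofReal (∫ z in closedBall 0 d, ‖z‖ ^ a ∂μ) * luxNorm (μ.restrict U) Φ f := by
  have hInt := integrableOn_closedBall_norm_rpow μ ha d
  refine ⟨hInt, fun f hf => ?_⟩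
  set K : E → ℝ := fun z => ‖z‖ ^ a
  set B : Set E := closedBall 0 d
  set F : E → ℝ := U.indicator fun y => |f y|
  have hB : MeasurableSet B := isClosed_closedBall.measurableSet
  have hF : AEMeasurable F μ := (aemeasurable_indicator_iff hU).2 hf.abs
  have hK0 (z : E) : 0 ≤ B.indicator K z := indicator_nonneg (fun _ _ => by positivity) z
  calc luxNorm (μ.restrict U) Φ (fun x => ∫ y in U, |f y| * K (y - x) ∂μ)
      = luxNorm (μ.restrict U) Φ (fun x => ∫ y, F y * B.indicator K (y - x) ∂μ) :=
        luxNorm_congr_ae <| ae_restrict_of_forall_mem hU fun _ hx =>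
          setIntegral_mul_eq_integral_indicator hU hUb hdiam (fun y => |f y|) K hx
    _ ≤ luxNorm μ Φ (fun x => ∫ y, F y * B.indicator K (y - x) ∂μ) :=
        luxNorm_mono_measure Measure.restrict_le_self
    _ ≤ ENNReal.ofReal (∫ z, B.indicator K z ∂μ) * luxNorm μ Φ F :=
        luxNorm_integral_mul_kernel_le hΦ hF (hInt.integrable_indicator hB) hK0
    _ = ENNReal.ofReal (∫ z in B, K z ∂μ) * luxNorm (μ.restrict U) Φ f := by
        rw [integral_indicator hB, luxNorm_indicator hΦ hU, luxNorm_abs hΦ]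

end RieszPotential

/-- Boundedness on `L^Φ(U)` of the Riesz-type potential `(Sf)(x) = ∫_U |f(y)|·|y-x|^{1-n} dy`
on a bounded measurable `U ⊂ ℝⁿ` of diameter `d`: with `C = ∫_{|z| ≤ d} |z|^{1-n} dz`
(a finite constant), one has `‖Sf‖_{(Φ),U} ≤ C ‖f‖_{(Φ),U}` for every measurable `f`. -/
theorem riesz_potential_orlicz_bound
    {n : ℕ} (hn : 2 ≤ n) {Φ : ℝ → ℝ} (hΦ : IsNFunction Φ)
    {U : Set (EuclideanSpace ℝ (Fin n))} (hU : MeasurableSet U)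
    (hUb : Bornology.IsBounded U) {d : ℝ} (hd : 0 < d) (hdiam : Metric.diam U = d) :
    IntegrableOn (fun z : EuclideanSpace ℝ (Fin n) => ‖z‖ ^ (1 - (n : ℝ)))
      (Metric.closedBall 0 d) ∧
    ∀ f : EuclideanSpace ℝ (Fin n) → ℝ, Measurable f →
      luxNorm (volume.restrict U) Φ
          (fun x => ∫ y in U, |f y| * ‖y - x‖ ^ (1 - (n : ℝ))) ≤
        ENNReal.ofReal
            (∫ z in Metric.closedBall (0 : EuclideanSpace ℝ (Fin n)) d, ‖z‖ ^ (1 - (n : ℝ))) *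
          luxNorm (volume.restrict U) Φ f := by
  have : Nontrivial (EuclideanSpace ℝ (Fin n)) :=
    nontrivial_of_finrank_pos (R := ℝ) (by rw [finrank_euclideanSpace_fin]; lia)
  have hexp : -(finrank ℝ (EuclideanSpace ℝ (Fin n)) : ℝ) < 1 - n := by
    rw [finrank_euclideanSpace_fin]; linarith
  have general :=
    riesz_potential_orlicz_bound_general volume hexp hΦ.isYoungFunction hU hUb hdiam.le
  exact ⟨general.1, fun f hf => general.2 f hf.aemeasurable⟩
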